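/- Let T ≥ 1 be such that σ(T) ≥ 0, m⁺(T) > 0 and m⁻(T) > 0, and assume Hypothesis (H4). Then σ(T) ≤ η₁(T) ≤ C₃·T^{1/3} + σ(T) and σ(T) ≤ η₂(T) ≤ C₃·T^{1/3} + σ(T). -/

import Mathlib

open MeasureTheory Real Filter Set

/-- `Z²(t) = |ζ(1/2 + it)|²`. -/
noncomputable def Z2 (t : ℝ) : ℝ := ‖riemannZeta (1/2 + t * Complex.I)‖^2

/-- `Z⁴(t) = |ζ(1/2 + it)|⁴`. -/
noncomputable def Z4 (t : ℝ) : ℝ := ‖riemannZeta (1/2 + t * Complex.I)‖^4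

/-- `σ(T)`, the main part of the mean value of `Z²`, built from a Jacob's ladder `φ`. -/
noncomputable def sigmaT (φ : ℝ → ℝ) (c c₀ T : ℝ) : ℝ :=
  (φ T / (2*T)) * Real.log (φ T / 2) + (c - Real.log (2*π)) * (φ T / (2*T)) + c₀ / T

/-- `S⁺(T) = {t ∈ [0,T] : Z²(t) ≥ σ(T)}`. -/
noncomputable def Splus (φ : ℝ → ℝ) (c c₀ T : ℝ) : Set ℝ :=
  {t ∈ Set.Icc (0:ℝ) T | sigmaT φ c c₀ T ≤ Z2 t}

/-- `S⁻(T) = {t ∈ [0,T] : Z²(t) < σ(T)}`. -/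
noncomputable def Sminus (φ : ℝ → ℝ) (c c₀ T : ℝ) : Set ℝ :=
  {t ∈ Set.Icc (0:ℝ) T | Z2 t < sigmaT φ c c₀ T}

/-- `m⁺(T) = ∫_{S⁺(T)} (Z²(t) − σ(T)) dt`. -/
noncomputable def mplus (φ : ℝ → ℝ) (c c₀ T : ℝ) : ℝ :=
  ∫ t in Splus φ c c₀ T, (Z2 t - sigmaT φ c c₀ T)

/-- `m⁻(T) = ∫_{S⁻(T)} (σ(T) − Z²(t)) dt`. -/
noncomputable def mminus (φ : ℝ → ℝ) (c c₀ T : ℝ) : ℝ :=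
  ∫ t in Sminus φ c c₀ T, (sigmaT φ c c₀ T - Z2 t)

/-- `η₁(T)`, the mean value of `Z² + σ(T)` on `S⁺(T)` weighted by `Z² − σ(T)`. -/
noncomputable def eta1 (φ : ℝ → ℝ) (c c₀ T : ℝ) : ℝ :=
  (∫ t in Splus φ c c₀ T, (Z4 t - (sigmaT φ c c₀ T)^2)) / mplus φ c c₀ T

/-- `η₂(T)`, the mean value of `Z² + σ(T)` on `S⁻(T)` weighted by `σ(T) − Z²`. -/
noncomputable def eta2 (φ : ℝ → ℝ) (c c₀ T : ℝ) : ℝ :=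
  (∫ t in Sminus φ c c₀ T, ((sigmaT φ c c₀ T)^2 - Z4 t)) / mminus φ c c₀ T

/-- `(s-1)` times the Euler–Maclaurin approximation of `ζ(s)` with cutoff `n+1`. -/
noncomputable def emB (n : ℕ) (s : ℂ) : ℂ :=
  (s - 1) * (∑ k ∈ Finset.range n, ((k:ℂ) + 1) ^ (-s) + ((n:ℂ) + 1) ^ (-s) / 2
    + s / 12 * ((n:ℂ) + 1) ^ (-s - 1)) + ((n:ℂ) + 1) ^ (1 - s)

lemma em_hasDeriv (r : ℂ) {x : ℝ} (hx : 0 < x) :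
    HasDerivAt (fun y : ℝ => (y:ℂ) ^ r) (r * (x:ℂ) ^ (r - 1)) x := by
  have h := (hasDerivAt_id (x:ℂ)).cpow_const (c := r) (Or.inl (by simpa using hx))
  simpa using h.comp_ofReal

lemma em_step (n : ℕ) (s : ℂ) :
    emB (n+1) s - emB n s = - ∫ x in ((n:ℝ)+1)..((n:ℝ)+2),
      (s - 1) * ((((x - (n+1))^2 * (1 - (x - (n+1)))^2 / 24 : ℝ) : ℂ) *
        (s * (s+1) * (s+2) * (s+3) * (x:ℂ) ^ (-s-4))) := by
  have hn : (0:ℝ) ≤ n := n.cast_nonneg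
  have hpos : ∀ x ∈ uIcc ((n:ℝ)+1) ((n:ℝ)+2), 0 < x := by
    intro x hx
    rw [uIcc_of_le (by linarith)] at hx
    linarith [hx.1]
  rw [intervalIntegral.integral_eq_sub_of_hasDerivAt
    (f := fun x : ℝ => (s - 1) * (
      (((x - (n+1))^2 * (1 - (x - (n+1)))^2 / 24 : ℝ) : ℂ) * (-(s * (s+1) * (s+2)) * (x:ℂ) ^ (-s-3))
      - (((x - (n+1)) * (1 - (x - (n+1))) * (1 - 2 * (x - (n+1))) / 12 : ℝ) : ℂ) * (s * (s+1) * (x:ℂ) ^ (-s-2))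
      + (((1 - 6 * (x - (n+1)) + 6 * (x-(n+1))^2) / 12 : ℝ) : ℂ) * (-s * (x:ℂ)^(-s-1))
      - (((-1 + 2 * (x - (n+1))) / 2 : ℝ) : ℂ) * (x:ℂ)^(-s)) - (x:ℂ)^(1-s))]
  · simp only [emB, Finset.sum_range_succ]
    push_cast
    ring_nf
  · intro x hx
    have hx0 := hpos x hx
    have d1 := em_hasDeriv (-s-3) hx0
    have d2 := em_hasDeriv (-s-2) hx0
    have d3 := em_hasDeriv (-s-1) hx0
    have d4 := em_hasDeriv (-s) hx0
    have d5 := em_hasDeriv (1-s) hx0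
    have h0 : HasDerivAt (fun x : ℝ => x - ((n:ℝ)+1)) 1 x := (hasDerivAt_id x).sub_const _
    have h1 : HasDerivAt (fun x : ℝ => (((x - (n+1))^2 * (1 - (x - (n+1)))^2 / 24 : ℝ) : ℂ))
        ((((x - (n+1)) * (1 - (x - (n+1))) * (1 - 2 * (x - (n+1))) / 12 : ℝ) : ℂ)) x := by
      apply HasDerivAt.ofReal_comp
      refine (((h0.pow 2).mul ((h0.const_sub 1).pow 2)).div_const 24).congr_deriv ?_
      simp; ring
    have h2 : HasDerivAt (fun x : ℝ => (((x - (n+1)) * (1 - (x - (n+1))) * (1 - 2 * (x - (n+1))) / 12 : ℝ) : ℂ))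
        ((((1 - 6 * (x - (n+1)) + 6 * (x-(n+1))^2) / 12 : ℝ) : ℂ)) x := by
      apply HasDerivAt.ofReal_comp
      refine (((h0.mul (h0.const_sub 1)).mul ((h0.const_mul 2).const_sub 1)).div_const 12).congr_deriv ?_
      simp; ring
    have h3 : HasDerivAt (fun x : ℝ => (((1 - 6 * (x - (n+1)) + 6 * (x-(n+1))^2) / 12 : ℝ) : ℂ))
        ((((-1 + 2 * (x - (n+1))) / 2 : ℝ) : ℂ)) x := by
      apply HasDerivAt.ofReal_comp
      refine ((((h0.const_mul 6).const_sub 1).add ((h0.pow 2).const_mul 6)).div_const 12).congr_deriv ?_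
      simp; ring
    have h4 : HasDerivAt (fun x : ℝ => (((-1 + 2 * (x - (n+1))) / 2 : ℝ) : ℂ)) ((1:ℝ):ℂ) x := by
      apply HasDerivAt.ofReal_comp
      refine (((h0.const_mul 2).const_add (-1)).div_const 2).congr_deriv ?_
      simp
    refine ((((((h1.mul (d1.const_mul (-(s * (s+1) * (s+2))))).sub
      (h2.mul (d2.const_mul (s * (s+1))))).add (h3.mul (d3.const_mul (-s)))).sub
      (h4.mul d4)).const_mul (s-1)).sub d5).congr_deriv ?_
    rw [show -s - 3 - 1 = -s - 4 by ring, show -s - 2 - 1 = -s - 3 by ring,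
      show -s - 1 - 1 = -s - 2 by ring, show 1 - s - 1 = -s by ring]
    push_cast
    ring
  · apply ContinuousOn.intervalIntegrable
    intro x hx
    have hx0 := hpos x hx
    have := (em_hasDeriv (-s-4) hx0).continuousAt
    apply ContinuousAt.continuousWithinAt
    have h2 : ContinuousAt (fun x : ℝ => (((x - (n+1))^2 * (1 - (x - (n+1)))^2 / 24 : ℝ) : ℂ)) x := by
      fun_prop
    exact continuousAt_const.mul (h2.mul (continuousAt_const.mul this))

lemma em_step_bound (n : ℕ) (s : ℂ) (hs : 0 < s.re) :
    ‖emB (n+1) s - emB n s‖ ≤ ‖s - 1‖ * (‖s‖ * ‖s+1‖ * ‖s+2‖ * ‖s+3‖) / 384 / (s.re + 3)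
      * (((n:ℝ)+1) ^ (-(s.re+3)) - ((n:ℝ)+2) ^ (-(s.re+3))) := by
  have hn : (0:ℝ) ≤ n := n.cast_nonneg
  have h0 : (0:ℝ) ∉ uIcc ((n:ℝ)+1) ((n:ℝ)+2) := by
    rw [uIcc_of_le (by linarith)]
    intro h
    linarith [h.1]
  rw [em_step, norm_neg]
  have key : ∀ᵐ x : ℝ, x ∈ Ioc ((n:ℝ)+1) ((n:ℝ)+2) → ‖(s - 1) * ((((x - (n+1))^2 * (1 - (x - (n+1)))^2 / 24 : ℝ) : ℂ) *
        (s * (s+1) * (s+2) * (s+3) * (x:ℂ) ^ (-s-4)))‖ ≤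
        (‖s - 1‖ * (‖s‖ * ‖s+1‖ * ‖s+2‖ * ‖s+3‖) / 384) * x ^ (-s.re - 4) := by
    refine Eventually.of_forall fun x hx => ?_
    have hx0 : 0 < x := by linarith [hx.1]
    rw [norm_mul, norm_mul, norm_mul, norm_mul, norm_mul, norm_mul, Complex.norm_cpow_eq_rpow_re_of_pos hx0,
      Complex.norm_real]
    have e : (-s-4).re = -s.re - 4 := by simp
    rw [e]
    have hP : ‖((x - (n+1))^2 * (1 - (x - (n+1)))^2 / 24 : ℝ)‖ ≤ 1/384 := by
      rw [Real.norm_of_nonneg (by positivity)]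
      have hy0 : 0 ≤ x - (n+1) := by linarith [hx.1]
      have hy1 : x - (n+1) ≤ 1 := by linarith [hx.2]
      generalize x - ((n:ℝ)+1) = y at *
      have a1 : y * (1-y) ≤ 1/4 := by nlinarith [sq_nonneg (y-1/2)]
      have a0 : 0 ≤ y * (1-y) := mul_nonneg hy0 (by linarith)
      nlinarith
    have hr : 0 ≤ x ^ (-s.re-4) := rpow_nonneg hx0.le _
    calc _ ≤ ‖s-1‖ * ((1/384) * (‖s‖ * ‖s+1‖ * ‖s+2‖ * ‖s+3‖ * x ^ (-s.re-4))) := by gcongr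
      _ = _ := by ring
  refine (intervalIntegral.norm_integral_le_of_norm_le (by linarith) key ?_).trans ?_
  · exact (intervalIntegral.intervalIntegrable_rpow (Or.inr h0)).const_mul _
  · rw [intervalIntegral.integral_const_mul, integral_rpow (Or.inr ⟨by linarith, h0⟩)]
    apply le_of_eq
    rw [show -s.re - 4 + 1 = -(s.re+3) by ring]
    have : s.re + 3 ≠ 0 := by linarith
    field_simp
    ring

lemma em_tendsto_of_one_lt (s : ℂ) (hs : 1 < s.re) :
    Tendsto (fun n => emB n s) atTop (nhds ((s-1) * riemannZeta s)) := by
  have hsum : HasSum (fun n : ℕ => ((n:ℂ)+1) ^ (-s)) (riemannZeta s) := by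
    have h1 : Summable (fun n : ℕ => 1 / ((n:ℂ)) ^ s) := by
      rwa [Complex.summable_one_div_nat_cpow]
    have h2 := (summable_nat_add_iff 1).2 h1
    have h3 := h2.hasSum
    have h4 := zeta_eq_tsum_one_div_nat_add_one_cpow hs
    push_cast at h3
    rw [← h4] at h3
    simpa [Complex.cpow_neg] using h3
  have hz : ∀ r : ℂ, r.re < 0 → Tendsto (fun n : ℕ => ((n:ℂ)+1) ^ r) atTop (nhds 0) := by
    intro r hr
    rw [tendsto_zero_iff_norm_tendsto_zero]
    have : ∀ n : ℕ, ‖((n:ℂ)+1) ^ r‖ = ((n:ℝ)+1) ^ (-(-r.re)) := by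
      intro n
      have := Complex.norm_cpow_eq_rpow_re_of_pos (x := (n:ℝ)+1) (by positivity) r
      push_cast at this
      rw [this, neg_neg]
    simp_rw [this]
    exact (tendsto_rpow_neg_atTop (by linarith)).comp
      (tendsto_atTop_add_const_right _ _ tendsto_natCast_atTop_atTop)
  have t1 := hsum.tendsto_sum_nat
  have t2 := (hz (-s) (by simp; linarith)).div_const 2
  have t3 := (hz (-s-1) (by simp; linarith)).const_mul (s/12)
  have t4 := hz (1-s) (by simp; linarith)
  simpa [emB] using (((t1.add t2).add t3).const_mul (s-1)).add t4

lemma em_tele_le (s : ℂ) (hs : 0 < s.re) (n k : ℕ) :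
    ‖emB (n+k) s - emB n s‖ ≤ ‖s - 1‖ * (‖s‖ * ‖s+1‖ * ‖s+2‖ * ‖s+3‖) / 384 / (s.re + 3)
      * (((n:ℝ)+1) ^ (-(s.re+3)) - ((n:ℝ)+k+1) ^ (-(s.re+3))) := by
  induction k with
  | zero => simp
  | succ k ih =>
    have h := em_step_bound (n+k) s hs
    have h2 := norm_add_le (emB (n+k+1) s - emB (n+k) s) (emB (n+k) s - emB n s)
    rw [sub_add_sub_cancel] at h2
    rw [← add_assoc]
    push_cast at h ⊢
    have e : (n:ℝ) + (k+1) + 1 = n + k + 2 := by ring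
    rw [e]
    calc _ ≤ _ := h2
      _ ≤ _ := add_le_add h ih
      _ = _ := by ring

lemma em_differentiable (n : ℕ) : Differentiable ℂ (emB n) := by
  unfold emB
  have h : ∀ k : ℕ, ((k:ℂ)+1) ≠ 0 := fun k => Nat.cast_add_one_ne_zero k
  have hd : ∀ (k : ℕ) (f : ℂ → ℂ), Differentiable ℂ f → Differentiable ℂ (fun s => ((k:ℂ)+1) ^ f s) := by
    intro k f hf s
    exact (hf s).const_cpow (Or.inl (h k))
  have d1 : ∀ k : ℕ, Differentiable ℂ (fun s : ℂ => ((k:ℂ)+1) ^ (-s)) := fun k => hd k _ (by fun_prop)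
  have d2 : ∀ k : ℕ, Differentiable ℂ (fun s : ℂ => ((k:ℂ)+1) ^ (-s-1)) := fun k => hd k _ (by fun_prop)
  have d3 : ∀ k : ℕ, Differentiable ℂ (fun s : ℂ => ((k:ℂ)+1) ^ (1-s)) := fun k => hd k _ (by fun_prop)
  fun_prop

lemma em_tendsto (s : ℂ) (hs : 0 < s.re) (hs1 : s ≠ 1) :
    Tendsto (fun n => emB n s) atTop (nhds ((s-1) * riemannZeta s)) := by
  set R : ℝ := ‖s‖ + 4 with hR
  let U : Set ℂ := {z | 0 < z.re} ∩ Metric.ball 0 R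
  have hUo : IsOpen U := (isOpen_lt continuous_const Complex.continuous_re).inter Metric.isOpen_ball
  have hUc : Convex ℝ U := (convex_halfSpace_re_gt 0).inter (convex_ball _ _)
  have hR0 : 0 < R := by positivity
  have hb : ∀ (i : ℕ) (w : ℂ), w ∈ U → ‖emB (i+1) w - emB i w‖ ≤ (R+3)^5 * ((i:ℝ)+1)^(-(2:ℝ)) := by
    intro i w hw
    have hw1 : 0 < w.re := hw.1
    have hw2 : ‖w‖ < R := by simpa using hw.2
    have hi : (1:ℝ) ≤ (i:ℝ)+1 := by have := i.cast_nonneg (α := ℝ); linarith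
    have c1 : ‖w - 1‖ ≤ R+3 := by
      have := norm_sub_le w 1; simp at this; linarith
    have c2 : ‖w + 1‖ ≤ R+3 := by
      have := norm_add_le w 1; simp at this; linarith
    have c3 : ‖w + 2‖ ≤ R+3 := by
      have := norm_add_le w 2; simp at this; linarith
    have c4 : ‖w + 3‖ ≤ R+3 := by
      have := norm_add_le w 3; simp at this; linarith
    have c5 : ‖w‖ ≤ R+3 := by linarith
    have p1 : ((i:ℝ)+1) ^ (-(w.re+3)) - ((i:ℝ)+2) ^ (-(w.re+3)) ≤ ((i:ℝ)+1)^(-(2:ℝ)) := by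
      have := rpow_le_rpow_of_exponent_le hi (show -(w.re+3) ≤ -(2:ℝ) by linarith)
      have h2 : 0 ≤ ((i:ℝ)+2) ^ (-(w.re+3)) := by positivity
      linarith
    refine (em_step_bound i w hw1).trans ?_
    have q : ‖w - 1‖ * (‖w‖ * ‖w+1‖ * ‖w+2‖ * ‖w+3‖) ≤ (R+3)^5 := by
      calc _ ≤ (R+3) * ((R+3) * (R+3) * (R+3) * (R+3)) := by gcongr
        _ = _ := by ring
    have q0 : 0 ≤ ‖w - 1‖ * (‖w‖ * ‖w+1‖ * ‖w+2‖ * ‖w+3‖) := by positivity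
    have q2 : ‖w - 1‖ * (‖w‖ * ‖w+1‖ * ‖w+2‖ * ‖w+3‖) / 384 / (w.re + 3) ≤ (R+3)^5 := by
      rw [div_div]
      refine (div_le_self q0 (by nlinarith)).trans q
    calc _ ≤ ‖w - 1‖ * (‖w‖ * ‖w+1‖ * ‖w+2‖ * ‖w+3‖) / 384 / (w.re + 3) * ((i:ℝ)+1)^(-(2:ℝ)) := by
          gcongr
      _ ≤ _ := by gcongr
  have hsu : Summable (fun i : ℕ => (R+3)^5 * ((i:ℝ)+1)^(-(2:ℝ))) := by
    apply Summable.mul_left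
    have := (summable_nat_add_iff 1).2 (Real.summable_nat_rpow.2 (show -(2:ℝ) < -1 by norm_num))
    simpa using this
  let G : ℂ → ℂ := fun w => emB 0 w + ∑' i : ℕ, (emB (i+1) w - emB i w)
  have hG : DifferentiableOn ℂ G U := by
    apply (em_differentiable 0).differentiableOn.fun_add
    exact Complex.differentiableOn_tsum_of_summable_norm hsu
      (fun i => ((em_differentiable (i+1)).sub (em_differentiable i)).differentiableOn) hUo hb
  have hT : ∀ w ∈ U, Tendsto (fun n => emB n w) atTop (nhds (G w)) := by
    intro w hw
    have hs : Summable (fun i : ℕ => emB (i+1) w - emB i w) :=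
      Summable.of_norm_bounded hsu (fun i => hb i w hw)
    have := hs.hasSum.tendsto_sum_nat.const_add (emB 0 w)
    simpa [Finset.sum_range_sub (fun i => emB i w)] using this
  have hE : EqOn G riemannZeta₁ U := by
    apply AnalyticOnNhd.eqOn_of_preconnected_of_eventuallyEq (z₀ := 2)
      (hG.analyticOnNhd hUo) (differentiable_riemannZeta₁.differentiableOn.analyticOnNhd hUo)
      hUc.isPreconnected
    · refine ⟨by simp, ?_⟩
      simp [hR]
      linarith [norm_nonneg s]
    · have hV : IsOpen ({z : ℂ | 1 < z.re} ∩ U) :=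
        (isOpen_lt continuous_const Complex.continuous_re).inter hUo
      have h2 : (2:ℂ) ∈ ({z : ℂ | 1 < z.re} ∩ U) := by
        refine ⟨by simp, by simp, ?_⟩
        simp [hR]
        linarith [norm_nonneg s]
      filter_upwards [hV.mem_nhds h2] with w hw
      have hw1 : w ≠ 1 := by
        rintro rfl
        simpa using hw.1
      rw [tendsto_nhds_unique (hT w hw.2) (em_tendsto_of_one_lt w hw.1), riemannZeta_eq_inv_sub_mul hw1]
      have := sub_ne_zero.2 hw1
      field_simp
  have hsU : s ∈ U := ⟨hs, by simp [hR]⟩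
  have := hT s hsU
  rw [hE hsU] at this
  convert this using 2
  rw [riemannZeta_eq_inv_sub_mul hs1]
  have := sub_ne_zero.2 hs1
  field_simp

lemma em_bound (s : ℂ) (hs : 0 < s.re) (hs1 : s ≠ 1) (n : ℕ) :
    ‖riemannZeta s - (∑ k ∈ Finset.range n, ((k:ℂ) + 1) ^ (-s) + ((n:ℂ) + 1) ^ (-s) *
      (1 / 2 + ((n:ℂ)+1) / (s-1) + s / (12 * ((n:ℂ)+1))))‖
    ≤ (‖s‖ * ‖s+1‖ * ‖s+2‖ * ‖s+3‖) / 384 / (s.re + 3) * ((n:ℝ)+1) ^ (-(s.re+3)) := by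
  have h1 : ‖(s-1) * riemannZeta s - emB n s‖ ≤
      ‖s - 1‖ * (‖s‖ * ‖s+1‖ * ‖s+2‖ * ‖s+3‖) / 384 / (s.re + 3) * ((n:ℝ)+1) ^ (-(s.re+3)) := by
    have ht : Tendsto (fun k => ‖emB (n+k) s - emB n s‖) atTop (nhds ‖(s-1) * riemannZeta s - emB n s‖) := by
      have := (tendsto_add_atTop_iff_nat n).2 (em_tendsto s hs hs1)
      simp_rw [add_comm _ n] at this
      exact (this.sub_const _).norm
    refine le_of_tendsto ht (Eventually.of_forall fun k => (em_tele_le s hs n k).trans ?_)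
    have : 0 ≤ ((n:ℝ)+k+1) ^ (-(s.re+3)) := by positivity
    gcongr
    linarith
  have hs1' := sub_ne_zero.2 hs1
  have hn : ((n:ℂ)+1) ≠ 0 := Nat.cast_add_one_ne_zero n
  have e : (s-1) * riemannZeta s - emB n s = (s-1) * (riemannZeta s - (∑ k ∈ Finset.range n, ((k:ℂ) + 1) ^ (-s) + ((n:ℂ) + 1) ^ (-s) *
      (1 / 2 + ((n:ℂ)+1) / (s-1) + s / (12 * ((n:ℂ)+1))))) := by
    unfold emB
    rw [show -s - 1 = -s + -1 by ring, show 1 - s = -s + 1 by ring, Complex.cpow_add _ _ hn,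
      Complex.cpow_add _ _ hn, Complex.cpow_neg_one, Complex.cpow_one]
    field_simp
    ring
  rw [e, norm_mul] at h1
  have hp : 0 < ‖s-1‖ := norm_pos_iff.2 hs1'
  refine le_of_mul_le_mul_left (h1.trans (le_of_eq ?_)) hp
  ring

lemma num_expI (b : ℝ) (hb : |b| ≤ 6/10) :
    ‖Complex.exp (-(b * Complex.I)) -
      (((1 - b^2/2 + b^4/24 : ℝ) : ℂ) - ((b - b^3/6 + b^5/120 : ℝ) : ℂ) * Complex.I)‖ ≤ 1/10000 := by
  have hn : ‖-((b:ℂ) * Complex.I)‖ = |b| := by simp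
  have h := Complex.exp_bound (x := -((b:ℂ) * Complex.I)) (by rw [hn]; linarith) (n := 6) (by norm_num)
  rw [hn] at h
  have e : ∑ m ∈ Finset.range 6, (-((b:ℂ) * Complex.I)) ^ m / (m.factorial : ℂ) =
      (((1 - b^2/2 + b^4/24 : ℝ) : ℂ) - ((b - b^3/6 + b^5/120 : ℝ) : ℂ) * Complex.I) := by
    simp only [Finset.sum_range_succ, Finset.sum_range_zero, Nat.factorial]
    push_cast
    have i2 : Complex.I ^ 2 = -1 := Complex.I_sq
    have i3 : Complex.I ^ 3 = -Complex.I := Complex.I_pow_three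
    have i4 : Complex.I ^ 4 = 1 := Complex.I_pow_four
    have i5 : Complex.I ^ 5 = Complex.I := by rw [pow_succ, i4, one_mul]
    ring_nf
    rw [i2, i3, i4, i5]
    ring
  rw [e] at h
  refine h.trans ?_
  have : |b|^6 ≤ (6/10)^6 := by gcongr
  norm_num [Nat.factorial] at this ⊢
  linarith

lemma num_prime (p : ℝ) (hp : 0 < p) (k : ℕ) (b r : ℝ) (hb : |b| ≤ 6/10)
    (hr0 : 0 ≤ r) (hr1 : r ≤ 1)
    (hb1 : b - 1/10000 ≤ 277/10 * Real.log p - k * (π / 2))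
    (hb2 : 277/10 * Real.log p - k * (π / 2) ≤ b + 1/10000)
    (hrl : (r - 1/10000)^2 ≤ 1/p) (hrl0 : 1/10000 ≤ r) (hru : 1/p ≤ (r + 1/10000)^2) :
    ‖(p:ℂ) ^ (-(1/2 + ((277/10 : ℝ) : ℂ) * Complex.I)) - (r:ℂ) * ((-Complex.I)^k *
      (((1 - b^2/2 + b^4/24 : ℝ) : ℂ) - ((b - b^3/6 + b^5/120 : ℝ) : ℂ) * Complex.I))‖ ≤ 3/10000 := by
  set c : ℂ := (((1 - b^2/2 + b^4/24 : ℝ) : ℂ) - ((b - b^3/6 + b^5/120 : ℝ) : ℂ) * Complex.I) with hc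
  set e : ℝ := 277/10 * Real.log p - k * (π / 2) - b with he
  set x : ℝ := Real.exp (-(1/2) * Real.log p) with hx
  have hx0 : 0 < x := Real.exp_pos _
  have hx2 : x ^ 2 = 1/p := by
    rw [hx, ← Real.exp_nat_mul]
    have : ((2:ℕ):ℝ) * (-(1/2) * Real.log p) = - Real.log p := by push_cast; ring
    rw [this, Real.exp_neg, Real.exp_log hp, one_div]
  have hxr : |x - r| ≤ 1/10000 := by
    rw [abs_le]
    constructor <;> nlinarith
  have heq : (p:ℂ) ^ (-(1/2 + ((277/10 : ℝ) : ℂ) * Complex.I)) =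
      (x:ℂ) * ((-Complex.I)^k * (Complex.exp (-(b * Complex.I)) * Complex.exp (Complex.I * ((-e : ℝ):ℂ)))) := by
    rw [Complex.cpow_def_of_ne_zero (by exact_mod_cast hp.ne'), ← Complex.ofReal_log hp.le]
    have hI : -Complex.I = Complex.exp (-(π/2 * Complex.I)) := by
      rw [Complex.exp_neg, Complex.exp_pi_div_two_mul_I, Complex.inv_I]
    rw [hI, ← Complex.exp_nat_mul, hx, Complex.ofReal_exp, ← Complex.exp_add, ← Complex.exp_add,
      ← Complex.exp_add, he]
    congr 1
    push_cast
    ring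
  have hE : ‖Complex.exp (Complex.I * ((-e : ℝ):ℂ)) - 1‖ ≤ 1/10000 := by
    refine (Real.norm_exp_I_mul_ofReal_sub_one_le).trans ?_
    rw [Real.norm_eq_abs, abs_le]
    constructor <;> linarith
  have hB := num_expI b hb
  rw [← hc] at hB
  have n1 : ‖Complex.exp (-(b * Complex.I))‖ = 1 := by
    rw [← neg_mul, ← Complex.ofReal_neg, Complex.norm_exp_ofReal_mul_I]
  have n2 : ‖Complex.exp (Complex.I * ((-e : ℝ):ℂ))‖ = 1 := by
    rw [mul_comm, Complex.norm_exp_ofReal_mul_I]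
  have n3 : ‖(-Complex.I)^k‖ = 1 := by simp
  rw [heq]
  generalize Complex.exp (-(b * Complex.I)) = B at *
  generalize Complex.exp (Complex.I * ((-e : ℝ):ℂ)) = E at *
  generalize (-Complex.I)^k = J at *
  have : (x:ℂ) * (J * (B * E)) - r * (J * c) =
    ((x - r : ℝ) : ℂ) * (J * (B * E)) + r * (J * (B * (E - 1))) + r * (J * (B - c)) := by
    push_cast; ring
  rw [this]
  refine norm_add₃_le.trans ?_
  simp only [norm_mul, Complex.norm_real, n1, n2, n3, Real.norm_eq_abs, abs_of_nonneg hr0, one_mul, mul_one]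
  nlinarith [norm_nonneg (E-1), norm_nonneg (B-c)]

lemma num_norm_le (z : ℂ) (u v : ℝ) (h1 : |z.re| ≤ u) (h2 : |z.im| ≤ v) : ‖z‖ ≤ u + v :=
  (Complex.norm_le_abs_re_add_abs_im z).trans (add_le_add h1 h2)

lemma num_log_sub (x y l : ℝ) (h : x = y * l) (hy : 0 < y) (hl : 0 < l) :
    1 - l⁻¹ ≤ Real.log x - Real.log y ∧ Real.log x - Real.log y ≤ l - 1 := by
  rw [h, Real.log_mul hy.ne' hl.ne']
  have := Real.log_le_sub_one_of_pos hl
  have := Real.one_sub_inv_le_log_of_pos hl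
  constructor <;> linarith

lemma num_log_seven : 1.94591 ≤ Real.log 7 ∧ Real.log 7 ≤ 1.945911 := by
  have h := num_log_sub (7^4) (2^5 * 3 * 5^2) (2401/2400) (by norm_num) (by norm_num) (by norm_num)
  rw [Real.log_mul (by norm_num) (by norm_num), Real.log_mul (by norm_num) (by norm_num),
    Real.log_pow, Real.log_pow, Real.log_pow] at h
  have a1 := Real.log_two_gt_d9
  have a2 := Real.log_two_lt_d9
  have a3 := Real.log_three_gt_d9
  have a4 := Real.log_three_lt_d9
  have a5 := Real.log_five_gt_d9
  have a6 := Real.log_five_lt_d9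
  norm_num at h a1 a2 a3 a4 a5 a6 ⊢
  constructor <;> linarith [h.1, h.2]

lemma num_log_eleven : 2.397894 ≤ Real.log 11 ∧ Real.log 11 ≤ 2.397897 := by
  have h := num_log_sub (7^4) (2^5 * 3 * 5^2) (2401/2400) (by norm_num) (by norm_num) (by norm_num)
  rw [Real.log_mul (by norm_num) (by norm_num), Real.log_mul (by norm_num) (by norm_num),
    Real.log_pow, Real.log_pow, Real.log_pow] at h
  have h' := num_log_sub (3^4 * 11^2) (2^3 * 5^2 * 7^2) (9801/9800) (by norm_num) (by norm_num) (by norm_num)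
  rw [Real.log_mul (by norm_num) (by norm_num), Real.log_mul (by norm_num) (by norm_num),
    Real.log_mul (by norm_num) (by norm_num),
    Real.log_pow, Real.log_pow, Real.log_pow, Real.log_pow, Real.log_pow] at h'
  have a1 := Real.log_two_gt_d9
  have a2 := Real.log_two_lt_d9
  have a3 := Real.log_three_gt_d9
  have a4 := Real.log_three_lt_d9
  have a5 := Real.log_five_gt_d9
  have a6 := Real.log_five_lt_d9
  norm_num at h h' a1 a2 a3 a4 a5 a6 ⊢
  constructor <;> linarith [h.1, h.2, h'.1, h'.2]

lemma num_negI4 : (-Complex.I)^4 = 1 := by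
  rw [Even.neg_pow (by decide), Complex.I_pow_four]

/-- The abscissa point used for the lower bound. -/
noncomputable def numS : ℂ := 1/2 + ((277/10 : ℝ) : ℂ) * Complex.I

lemma num_two : ‖(2:ℂ) ^ (-numS) - ⟨664/1000, -243/1000⟩‖ ≤ 2/1000 := by
  have a1 := Real.log_two_gt_d9
  have a2 := Real.log_two_lt_d9
  have a3 := Real.pi_gt_d6
  have a4 := Real.pi_lt_d6
  norm_num at a1 a2 a3 a4
  have h := num_prime 2 (by norm_num) 12 (3506/10000) (7071/10000) (by norm_num [abs_le]) (by norm_num) (by norm_num)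
    (by norm_num; linarith) (by norm_num; linarith) (by norm_num) (by norm_num) (by norm_num)
  have hk : (-Complex.I)^12 = 1 := by
    rw [show 12 = 4 * 3 by norm_num, pow_mul, neg_pow, Complex.I_pow_four]; norm_num
  rw [hk] at h
  refine (norm_sub_le_norm_sub_add_norm_sub _ _ _).trans (add_le_add h ?_) |>.trans (b := 3/10000 + (5/10000 + 5/10000)) (by norm_num)
  apply num_norm_le <;> norm_num [abs_le]

lemma num_three : ‖(3:ℂ) ^ (-numS) - ⟨3195/10000, 481/1000⟩‖ ≤ 2/1000 := by
  have a1 := Real.log_three_gt_d9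
  have a2 := Real.log_three_lt_d9
  have a3 := Real.pi_gt_d6
  have a4 := Real.pi_lt_d6
  norm_num at a1 a2 a3 a4
  have h := num_prime 3 (by norm_num) 19 (5864/10000) (57735/100000) (by norm_num [abs_le]) (by norm_num) (by norm_num)
    (by norm_num; linarith) (by norm_num; linarith) (by norm_num) (by norm_num) (by norm_num)
  have hk : (-Complex.I)^19 = Complex.I := by
    rw [show 19 = 4 * 4 + 3 by norm_num, pow_add, pow_mul, num_negI4, Odd.neg_pow (by decide), Complex.I_pow_three]; norm_num
  rw [hk] at h
  refine (norm_sub_le_norm_sub_add_norm_sub _ _ _).trans (add_le_add h ?_) |>.trans (b := 3/10000 + (5/10000 + 5/10000)) (by norm_num)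
  apply num_norm_le <;> norm_num [abs_le]

lemma num_five : ‖(5:ℂ) ^ (-numS) - ⟨369/1000, -252/1000⟩‖ ≤ 2/1000 := by
  have a1 := Real.log_five_gt_d9
  have a2 := Real.log_five_lt_d9
  have a3 := Real.pi_gt_d6
  have a4 := Real.pi_lt_d6
  norm_num at a1 a2 a3 a4
  have h := num_prime 5 (by norm_num) 28 (59913/100000) (4472/10000) (by norm_num [abs_le]) (by norm_num) (by norm_num)
    (by norm_num; linarith) (by norm_num; linarith) (by norm_num) (by norm_num) (by norm_num)
  have hk : (-Complex.I)^28 = 1 := by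
    rw [show 28 = 4 * 7 by norm_num, pow_mul, neg_pow, Complex.I_pow_four]; norm_num
  rw [hk] at h
  refine (norm_sub_le_norm_sub_add_norm_sub _ _ _).trans (add_le_add h ?_) |>.trans (b := 3/10000 + (5/10000 + 5/10000)) (by norm_num)
  apply num_norm_le <;> norm_num [abs_le]

lemma num_seven : ‖(7:ℂ) ^ (-numS) - ⟨-333/1000, 179/1000⟩‖ ≤ 2/1000 := by
  obtain ⟨a1, a2⟩ := num_log_seven
  have a3 := Real.pi_gt_d6
  have a4 := Real.pi_lt_d6
  norm_num at a1 a2 a3 a4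
  have h := num_prime 7 (by norm_num) 34 (49464/100000) (37796/100000) (by norm_num [abs_le]) (by norm_num) (by norm_num)
    (by norm_num; linarith) (by norm_num; linarith) (by norm_num) (by norm_num) (by norm_num)
  have hk : (-Complex.I)^34 = -1 := by
    rw [show 34 = 4 * 8 + 2 by norm_num, pow_add, pow_mul, num_negI4, neg_sq, Complex.I_sq]; norm_num
  rw [hk] at h
  refine (norm_sub_le_norm_sub_add_norm_sub _ _ _).trans (add_le_add h ?_) |>.trans (b := 3/10000 + (5/10000 + 5/10000)) (by norm_num)
  apply num_norm_le <;> norm_num [abs_le]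

lemma num_eleven : ‖(11:ℂ) ^ (-numS) - ⟨-272/1000, 131/1000⟩‖ ≤ 2/1000 := by
  obtain ⟨a1, a2⟩ := num_log_eleven
  have a3 := Real.pi_gt_d6
  have a4 := Real.pi_lt_d6
  norm_num at a1 a2 a3 a4
  have h := num_prime 11 (by norm_num) 42 (44825/100000) (30151/100000) (by norm_num [abs_le]) (by norm_num) (by norm_num)
    (by norm_num; linarith) (by norm_num; linarith) (by norm_num) (by norm_num) (by norm_num)
  have hk : (-Complex.I)^42 = -1 := by
    rw [show 42 = 4 * 10 + 2 by norm_num, pow_add, pow_mul, num_negI4, neg_sq, Complex.I_sq]; norm_num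
  rw [hk] at h
  refine (norm_sub_le_norm_sub_add_norm_sub _ _ _).trans (add_le_add h ?_) |>.trans (b := 3/10000 + (5/10000 + 5/10000)) (by norm_num)
  apply num_norm_le <;> norm_num [abs_le]

lemma num_mul_err {z w a b : ℂ} {ε δ : ℝ} (hz : ‖z - a‖ ≤ ε) (hw : ‖w - b‖ ≤ δ)
    (hz1 : ‖z‖ ≤ 1) (hb1 : ‖b‖ ≤ 1) : ‖z * w - a * b‖ ≤ ε + δ := by
  have : z * w - a * b = z * (w - b) + (z - a) * b := by ring
  rw [this]
  refine (norm_add_le _ _).trans ?_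
  rw [norm_mul, norm_mul]
  nlinarith [norm_nonneg (w-b), norm_nonneg (z-a), norm_nonneg z, norm_nonneg b]

lemma num_K : ‖(1/2 + 12 / (numS - 1) + numS / (12 * 12)) - ⟨496/1000, -241/1000⟩‖ ≤ 2/1000 := by
  have h : 12 / (numS - 1) = ⟨-6 / (767.54), -332.4 / 767.54⟩ := by
    have h0 : numS - 1 ≠ 0 := by
      intro h
      have := congrArg Complex.re h
      norm_num [numS] at this
    rw [div_eq_iff h0]
    apply Complex.ext <;> norm_num [numS]
  rw [h]
  refine (num_norm_le _ (1/1000) (1/1000) ?_ ?_).trans (by norm_num) <;> norm_num [numS, abs_le]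

lemma num_re {z w : ℂ} {ε : ℝ} (h : ‖z - w‖ ≤ ε) : w.re - ε ≤ z.re := by
  have := (abs_le.1 ((Complex.abs_re_le_norm (z - w)).trans h)).1
  simp only [Complex.sub_re] at this
  linarith

lemma num_lower : 265/100 ≤ ‖riemannZeta numS‖ := by
  have hre : numS.re = 1/2 := by norm_num [numS]
  have him : numS.im = 277/10 := by norm_num [numS]
  have h1 : numS ≠ 1 := by
    intro h
    have := congrArg Complex.im h
    norm_num [him] at this
  have hem := em_bound numS (by rw [hre]; norm_num) h1 11
  have hnat : ∀ m n : ℕ, (((m * n : ℕ) : ℂ)) ^ (-numS) = (m:ℂ)^(-numS) * (n:ℂ)^(-numS) := by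
    intro m n
    push_cast
    exact Complex.natCast_mul_natCast_cpow m n _
  have z4 := hnat 2 2
  have z6 := hnat 2 3
  have z8 := hnat 2 4
  have z9 := hnat 3 3
  have z10 := hnat 2 5
  have z12 := hnat 2 6
  norm_num at z4 z6 z8 z9 z10 z12
  have hle : ∀ n : ℕ, 1 ≤ n → ‖(n:ℂ)^(-numS)‖ ≤ 1 := by
    intro n hn
    have := Complex.norm_cpow_eq_rpow_re_of_pos (x := (n:ℝ)) (by positivity) (-numS)
    push_cast at this
    rw [this]
    apply Real.rpow_le_one_of_one_le_of_nonpos (by exact_mod_cast hn)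
    simp [hre]
  have l2 := hle 2 (by norm_num)
  have l3 := hle 3 (by norm_num)
  have l5 := hle 5 (by norm_num)
  have l6 := hle 6 (by norm_num)
  have l12 := hle 12 (by norm_num)
  push_cast at l2 l3 l5 l6 l12
  have e2 := num_two
  have e3 := num_three
  have e5 := num_five
  have e7 := num_seven
  have e11 := num_eleven
  have eK := num_K
  have nb : ∀ x y : ℝ, |x| + |y| ≤ 1 → ‖(⟨x, y⟩ : ℂ)‖ ≤ 1 := fun x y h =>
    (Complex.norm_le_abs_re_add_abs_im _).trans h
  have b2 : ‖(⟨664/1000, -243/1000⟩ : ℂ)‖ ≤ 1 := nb _ _ (by norm_num [abs_of_pos, abs_of_neg])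
  have b3 : ‖(⟨3195/10000, 481/1000⟩ : ℂ)‖ ≤ 1 := nb _ _ (by norm_num [abs_of_pos, abs_of_neg])
  have b5 : ‖(⟨369/1000, -252/1000⟩ : ℂ)‖ ≤ 1 := nb _ _ (by norm_num [abs_of_pos, abs_of_neg])
  have bK : ‖(⟨496/1000, -241/1000⟩ : ℂ)‖ ≤ 1 := nb _ _ (by norm_num [abs_of_pos, abs_of_neg])
  have e4 := num_mul_err e2 e2 l2 b2
  have b4 : ‖(⟨664/1000, -243/1000⟩ : ℂ) * ⟨664/1000, -243/1000⟩‖ ≤ 1 := by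
    rw [norm_mul]; exact mul_le_one₀ b2 (norm_nonneg _) b2
  have e6 := num_mul_err e2 e3 l2 b3
  have b6 : ‖(⟨664/1000, -243/1000⟩ : ℂ) * ⟨3195/10000, 481/1000⟩‖ ≤ 1 := by
    rw [norm_mul]; exact mul_le_one₀ b2 (norm_nonneg _) b3
  have e8 := num_mul_err e2 e4 l2 b4
  have e9 := num_mul_err e3 e3 l3 b3
  have e10 := num_mul_err e2 e5 l2 b5
  have e12 := num_mul_err e2 e6 l2 b6
  have e13 := num_mul_err e12 eK (by rw [← z6, ← z12]; exact l12) bK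
  simp only [Finset.sum_range_succ, Finset.sum_range_zero] at hem
  norm_num at hem
  rw [z12, z10, z9, z8, z6, z4] at hem
  -- the remainder
  have hnorm : ∀ j : ℝ, 0 ≤ j → j ≤ 3 → ‖numS + (j:ℂ)‖ ≤ 28 := by
    intro j hj hj3
    have : ‖numS + (j:ℂ)‖^2 ≤ 28^2 := by
      rw [← Complex.normSq_eq_norm_sq, Complex.normSq_apply]
      simp only [Complex.add_re, Complex.add_im, Complex.ofReal_re, Complex.ofReal_im, hre, him]
      nlinarith
    exact le_of_sq_le_sq this (by norm_num)
  have n0 := hnorm 0 (by norm_num) (by norm_num)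
  have n1 := hnorm 1 (by norm_num) (by norm_num)
  have n2 := hnorm 2 (by norm_num) (by norm_num)
  have n3 := hnorm 3 (by norm_num) (by norm_num)
  norm_num at n0 n1 n2 n3
  have hpow : (12:ℝ) ^ (-3 + -numS.re) ≤ 1/5900 := by
    rw [hre]
    have h0 : 0 ≤ (12:ℝ) ^ (-3 + -(1/2 : ℝ)) := by positivity
    have h2 : ((12:ℝ) ^ (-3 + -(1/2 : ℝ)))^2 = 1/12^7 := by
      rw [← Real.rpow_natCast, ← Real.rpow_mul (by norm_num)]
      rw [show (-3 + -(1/2:ℝ)) * ((2:ℕ):ℝ) = -((7:ℕ):ℝ) by norm_num, Real.rpow_neg (by norm_num),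
        Real.rpow_natCast, one_div]
    refine le_of_sq_le_sq ?_ (by norm_num)
    rw [h2]
    norm_num
  have hR : ‖numS‖ * ‖numS + 1‖ * ‖numS + 2‖ * ‖numS + 3‖ / 384 / (numS.re + 3) * 12 ^ (-3 + -numS.re)
      ≤ 28 * 28 * 28 * 28 / 384 / (1/2 + 3) * (1/5900) := by
    rw [hre] at hpow ⊢
    gcongr
  replace hem := hem.trans hR
  rw [show (12:ℂ) * 12 = 144 by norm_num] at e13
  have hz := num_re hem
  have q2 := num_re e2
  have q3 := num_re e3
  have q4 := num_re e4
  have q5 := num_re e5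
  have q6 := num_re e6
  have q7 := num_re e7
  have q8 := num_re e8
  have q9 := num_re e9
  have q10 := num_re e10
  have q11 := num_re e11
  have q13 := num_re e13
  simp only [Complex.add_re, Complex.one_re] at hz
  generalize ((2:ℂ) ^ (-numS)) * (2 ^ (-numS) * 3 ^ (-numS)) * (1 / 2 + 12 / (numS - 1) + numS / 144) = w13 at *
  generalize ((2:ℂ) ^ (-numS)) * (2 ^ (-numS) * 2 ^ (-numS)) = w8 at *
  generalize ((2:ℂ) ^ (-numS)) * 2 ^ (-numS) = w4 at *
  generalize ((2:ℂ) ^ (-numS)) * 3 ^ (-numS) = w6 at *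
  generalize ((2:ℂ) ^ (-numS)) * 5 ^ (-numS) = w10 at *
  generalize ((3:ℂ) ^ (-numS)) * 3 ^ (-numS) = w9 at *
  simp only [Complex.mul_re, Complex.mul_im] at q4 q6 q8 q9 q10 q13
  refine le_trans ?_ (Complex.re_le_norm _)
  norm_num at *
  linarith

lemma num_upper (t : ℝ) (ht0 : 0 ≤ t) (ht1 : t ≤ 1) :
    ‖riemannZeta (1/2 + t * Complex.I)‖ ≤ 3/2 := by
  set s : ℂ := 1/2 + t * Complex.I with hs
  have hre : s.re = 1/2 := by norm_num [hs]
  have him : s.im = t := by norm_num [hs]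
  have h1 : s ≠ 1 := by
    intro h
    have := congrArg Complex.re h
    norm_num [hre] at this
  have hem := em_bound s (by rw [hre]; norm_num) h1 0
  norm_num at hem
  have hnorm : ∀ j c : ℝ, 0 ≤ j → 0 ≤ c → (1/2 + j)^2 + 1 ≤ c^2 → ‖s + (j:ℂ)‖ ≤ c := by
    intro j c hj hc h
    have : ‖s + (j:ℂ)‖^2 ≤ c^2 := by
      rw [← Complex.normSq_eq_norm_sq, Complex.normSq_apply]
      simp only [Complex.add_re, Complex.add_im, Complex.ofReal_re, Complex.ofReal_im, hre, him]
      nlinarith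
    exact le_of_sq_le_sq this hc
  have n0 := hnorm 0 1.12 (by norm_num) (by norm_num) (by norm_num)
  have n1 := hnorm 1 1.81 (by norm_num) (by norm_num) (by norm_num)
  have n2 := hnorm 2 2.7 (by norm_num) (by norm_num) (by norm_num)
  have n3 := hnorm 3 3.65 (by norm_num) (by norm_num) (by norm_num)
  norm_num at n0 n1 n2 n3
  have hM : ‖1/2 + 1/(s-1) + s/12‖ ≤ 148/100 := by
    have hu : (0:ℝ) < 1/4 + t^2 := by positivity
    have hinv : 1/(s-1) = ⟨-(1/2)/(1/4+t^2), -t/(1/4+t^2)⟩ := by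
      rw [div_eq_iff (sub_ne_zero.2 h1)]
      apply Complex.ext
      · simp [hre, him]; field_simp; ring
      · simp [hre, him]; field_simp; ring
    rw [hinv]
    have : ‖1/2 + (⟨-(1/2)/(1/4+t^2), -t/(1/4+t^2)⟩ : ℂ) + s/12‖^2 ≤ (148/100)^2 := by
      rw [← Complex.normSq_eq_norm_sq, Complex.normSq_apply]
      have r1 : (1/2 + (⟨-(1/2)/(1/4+t^2), -t/(1/4+t^2)⟩ : ℂ) + s/12).re = 13/24 - (1/2)/(1/4+t^2) := by
        simp [hre]; ring
      have r2 : (1/2 + (⟨-(1/2)/(1/4+t^2), -t/(1/4+t^2)⟩ : ℂ) + s/12).im = t * (1/12 - 1/(1/4+t^2)) := by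
        simp [him]; ring
      rw [r1, r2]
      have ht2 : t^2 ≤ 1 := by nlinarith
      have : (13/24 - (1/2)/(1/4+t^2)) * (13/24 - (1/2)/(1/4+t^2)) + t * (1/12 - 1/(1/4+t^2)) * (t * (1/12 - 1/(1/4+t^2)))
        = ((13/24 * (1/4+t^2) - 1/2)^2 + t^2 * ((1/4+t^2)/12 - 1)^2) / (1/4+t^2)^2 := by
        field_simp
      rw [this, div_le_iff₀ (by positivity)]
      have hv : 0 ≤ t^2 := by positivity
      generalize t^2 = v at *
      nlinarith [mul_nonneg hv (sub_nonneg.2 ht2), mul_nonneg (mul_nonneg hv hv) (sub_nonneg.2 ht2)]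
    exact le_of_sq_le_sq this (by norm_num)
  have hR : ‖s‖ * ‖s + 1‖ * ‖s + 2‖ * ‖s + 3‖ / 384 / (s.re + 3) ≤
      28/25 * (181/100) * (27/10) * (73/20) / 384 / (1/2 + 3) := by
    rw [hre]
    gcongr
  rw [one_div (s-1)] at hM
  have h3 := norm_add_le (riemannZeta s - (1 / 2 + (s - 1)⁻¹ + s / 12)) (1 / 2 + (s - 1)⁻¹ + s / 12)
  rw [sub_add_cancel] at h3
  norm_num at hR
  linarith

lemma Z2_continuous : Continuous Z2 := by
  unfold Z2
  apply Continuous.pow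
  apply Continuous.norm
  rw [continuous_iff_continuousAt]
  intro t
  have h : (1/2 + (t:ℂ) * Complex.I) ≠ 1 := by
    intro h
    have := congrArg Complex.re h
    norm_num at this
  exact ContinuousAt.comp (f := fun t : ℝ => 1/2 + (t:ℂ) * Complex.I)
    (differentiableAt_riemannZeta h).continuousAt (by fun_prop)

lemma Z2_nonneg (t : ℝ) : 0 ≤ Z2 t := by unfold Z2; positivity

lemma Z4_eq (t : ℝ) : Z4 t = Z2 t ^ 2 := by unfold Z4 Z2; ring

lemma Z2_le_of_H4 (C₃ : ℝ) (hC₃ : 0 < C₃) (hH4 : ∀ t ≥ (1:ℝ), Z2 t ≤ C₃ * t ^ ((1:ℝ)/3))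
    (T : ℝ) (hT : 1 ≤ T) (t : ℝ) (ht : t ∈ Icc 0 T) : Z2 t ≤ C₃ * T ^ ((1:ℝ)/3) := by
  rcases le_total t 1 with h | h
  · have h1 : Z2 t ≤ (3/2)^2 := by
      unfold Z2
      have := num_upper t ht.1 h
      gcongr
    have h2 : (265/100)^2 ≤ Z2 (277/10) := by
      unfold Z2
      have := num_lower
      unfold numS at this
      gcongr
    have h3 := hH4 (277/10) (by norm_num)
    have h4 : (277/10 : ℝ) ^ ((1:ℝ)/3) ≤ 304/100 := by
      have : (277/10 : ℝ) ≤ (304/100 : ℝ) ^ (3:ℝ) := by norm_num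
      calc (277/10 : ℝ) ^ ((1:ℝ)/3) ≤ ((304/100 : ℝ) ^ (3:ℝ)) ^ ((1:ℝ)/3) := by gcongr
        _ = 304/100 := by
          rw [← Real.rpow_mul (by norm_num)]
          norm_num
    have h5 : 1 ≤ T ^ ((1:ℝ)/3) := Real.one_le_rpow hT (by norm_num)
    have h6 : C₃ * (277/10 : ℝ) ^ ((1:ℝ)/3) ≤ C₃ * (304/100) := by gcongr
    have h7 : C₃ * 1 ≤ C₃ * T ^ ((1:ℝ)/3) := by gcongr
    linarith
  · refine (hH4 t h).trans ?_
    have := ht.2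
    gcongr

/-- For `T ≥ 1` with `σ(T) ≥ 0`, `m⁺(T) > 0`, `m⁻(T) > 0`, under hypothesis (H4),
both `η₁(T)` and `η₂(T)` lie between `σ(T)` and `C₃·T^{1/3} + σ(T)`. -/
theorem eta_bounds (φ : ℝ → ℝ) (c c₀ T : ℝ) (hT : 1 ≤ T)
    (hσ : 0 ≤ sigmaT φ c c₀ T)
    (hmp : 0 < mplus φ c c₀ T) (hmm : 0 < mminus φ c c₀ T)
    (C₃ : ℝ) (hC₃ : 0 < C₃) (hH4 : ∀ t ≥ (1:ℝ), Z2 t ≤ C₃ * t ^ ((1:ℝ)/3)) :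
    (sigmaT φ c c₀ T ≤ eta1 φ c c₀ T ∧ eta1 φ c c₀ T ≤ C₃ * T ^ ((1:ℝ)/3) + sigmaT φ c c₀ T) ∧
    (sigmaT φ c c₀ T ≤ eta2 φ c c₀ T ∧ eta2 φ c c₀ T ≤ C₃ * T ^ ((1:ℝ)/3) + sigmaT φ c c₀ T) := by
  have hub := Z2_le_of_H4 C₃ hC₃ hH4 T hT
  have hc := Z2_continuous
  have hmsP : MeasurableSet (Splus φ c c₀ T) :=
    measurableSet_Icc.inter (measurableSet_le measurable_const hc.measurable)
  have hmsM : MeasurableSet (Sminus φ c c₀ T) :=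
    measurableSet_Icc.inter (measurableSet_lt hc.measurable measurable_const)
  have hsubP : Splus φ c c₀ T ⊆ Icc 0 T := fun t ht => ht.1
  have hsubM : Sminus φ c c₀ T ⊆ Icc 0 T := fun t ht => ht.1
  have hmemP : ∀ t ∈ Splus φ c c₀ T, sigmaT φ c c₀ T ≤ Z2 t := fun t ht => ht.2
  have hmemM : ∀ t ∈ Sminus φ c c₀ T, Z2 t < sigmaT φ c c₀ T := fun t ht => ht.2
  unfold eta1 eta2
  rw [le_div_iff₀ hmp, div_le_iff₀ hmp, le_div_iff₀ hmm, div_le_iff₀ hmm]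
  unfold mplus mminus
  generalize sigmaT φ c c₀ T = σ at *
  generalize C₃ * T ^ ((1:ℝ)/3) = D at *
  simp_rw [Z4_eq]
  have hint : ∀ (S : Set ℝ), S ⊆ Icc 0 T → ∀ f : ℝ → ℝ, Continuous f → IntegrableOn f S :=
    fun S hS f hf => (hf.continuousOn.integrableOn_compact isCompact_Icc).mono_set hS
  simp_rw [← integral_const_mul]
  refine ⟨⟨?_, ?_⟩, ?_, ?_⟩
  · refine setIntegral_mono_on (hint _ hsubP _ (by fun_prop)) (hint _ hsubP _ (by fun_prop)) hmsP ?_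
    intro t ht
    nlinarith [hmemP t ht, Z2_nonneg t]
  · refine setIntegral_mono_on (hint _ hsubP _ (by fun_prop)) (hint _ hsubP _ (by fun_prop)) hmsP ?_
    intro t ht
    nlinarith [hmemP t ht, Z2_nonneg t, hub t (hsubP ht)]
  · refine setIntegral_mono_on (hint _ hsubM _ (by fun_prop)) (hint _ hsubM _ (by fun_prop)) hmsM ?_
    intro t ht
    nlinarith [hmemM t ht, Z2_nonneg t]
  · refine setIntegral_mono_on (hint _ hsubM _ (by fun_prop)) (hint _ hsubM _ (by fun_prop)) hmsM ?_
    intro t ht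
    nlinarith [hmemM t ht, Z2_nonneg t, hub t (hsubM ht)]
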